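/- Let f be a Schwartz function on ℝ³. Then there exist C > 0, R₀ > 0, T₀ > 0 such that for all x ∈ ℝ³ with |x| ≥ R₀ and all t ≥ T₀, and every integer 0 ≤ q ≤ 2, (|x|/t)^q · |∫_{ℝ³} e^{i|x| |y| /(2t)} f(y) d³y| ≤ C. -/

import Mathlib

/-!
In polar coordinates the integral is `∫_{S²} ∫₀^∞ e^{ikr} r² f(rω) dr dσ(ω)` with `k = |x|/(2t)`.
On each ray the function `g(r) = r² f(rω)` satisfies `g(0) = g'(0) = 0` and decays with its
derivatives, so two integrations by parts give `k² ∫₀^∞ e^{ikr} g = -∫₀^∞ e^{ikr} g''`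
(`sq_mul_norm_oscillatory_integral_le`); both are packaged in the single primitive
`e^{ikr} (g' - ikg)` of `e^{ikr} (g'' + k²g)`. Schwartz decay of `f`, `Df` and `D²f` bounds `g''` by
`B / (1 + r²)` uniformly in `ω` (`exists_ray_bound`). As the sphere has finite measure, this settles
`q = 2`; the case `q = 0` is integrability of `f`, and `q = 1` follows from `a ≤ 1 + a²`.
-/

open MeasureTheory

open Set Filter Topology

/-- Two integrations by parts on the half-line, without boundary terms because
`g` and its derivative `g₁` vanish at `0` and at infinity. -/
lemma sq_mul_norm_oscillatory_integral_le {g g₁ g₂ : ℝ → ℂ} {B : ℝ} (k : ℝ)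
    (hg : ∀ r, HasDerivAt g (g₁ r) r) (hg₁ : ∀ r, HasDerivAt g₁ (g₂ r) r)
    (hcont : Continuous g₂) (h0 : g 0 = 0) (h10 : g₁ 0 = 0)
    (b0 : ∀ r, 0 ≤ r → ‖g r‖ ≤ B * (1 + r ^ 2)⁻¹)
    (b1 : ∀ r, 0 ≤ r → ‖g₁ r‖ ≤ B * (1 + r ^ 2)⁻¹)
    (b2 : ∀ r, 0 ≤ r → ‖g₂ r‖ ≤ B * (1 + r ^ 2)⁻¹) :
    k ^ 2 * ‖∫ r in Ioi (0 : ℝ), Complex.exp (Complex.I * k * r) * g r‖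
      ≤ ∫ r in Ioi (0 : ℝ), B * (1 + r ^ 2)⁻¹ := by
  have hE : ∀ r : ℝ, ‖Complex.exp (Complex.I * k * r)‖ = 1 := fun r => by
    rw [show Complex.I * k * r = ((k * r : ℝ) : ℂ) * Complex.I by push_cast; ring,
      Complex.norm_exp_ofReal_mul_I]
  have hdom : IntegrableOn (fun r : ℝ => B * (1 + r ^ 2)⁻¹) (Ioi 0) :=
    (integrable_inv_one_add_sq.const_mul B).integrableOn
  have hgc : Continuous g := continuous_iff_continuousAt.2 fun r => (hg r).continuousAt
  have hEc : Continuous fun r : ℝ => Complex.exp (Complex.I * k * r) := by fun_prop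
  have hint : ∀ u : ℝ → ℂ, Continuous u → (∀ r, 0 ≤ r → ‖u r‖ ≤ B * (1 + r ^ 2)⁻¹) →
      IntegrableOn (fun r : ℝ => Complex.exp (Complex.I * k * r) * u r) (Ioi 0) := by
    intro u hu hb
    refine Integrable.mono' hdom (hEc.mul hu).aestronglyMeasurable ?_
    filter_upwards [ae_restrict_mem measurableSet_Ioi] with r hr
    rw [norm_mul, hE, one_mul]
    exact hb r (le_of_lt hr)
  have hi0 := hint g hgc b0
  have hi2 := hint g₂ hcont b2
  have hdecay : Tendsto (fun r : ℝ => B * (1 + r ^ 2)⁻¹) atTop (𝓝 0) := by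
    have h : Tendsto (fun r : ℝ => 1 + r ^ 2) atTop atTop :=
      tendsto_atTop_add_const_left _ _ (tendsto_pow_atTop two_ne_zero)
    simpa using h.inv_tendsto_atTop.const_mul B
  have hz : ∀ u : ℝ → ℂ, (∀ r, 0 ≤ r → ‖u r‖ ≤ B * (1 + r ^ 2)⁻¹) →
      Tendsto u atTop (𝓝 0) := by
    intro u hb
    refine squeeze_zero_norm' ?_ hdecay
    filter_upwards [eventually_ge_atTop 0] with r hr using hb r hr
  have hderiv : ∀ r : ℝ, HasDerivAt
      (fun r : ℝ => Complex.exp (Complex.I * k * r) * (g₁ r - Complex.I * k * g r))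
      (Complex.exp (Complex.I * k * r) * g₂ r
        + (k : ℂ) ^ 2 * (Complex.exp (Complex.I * k * r) * g r)) r := by
    intro r
    have h1 : HasDerivAt (fun r : ℝ => Complex.I * k * (r : ℂ)) (Complex.I * k) r := by
      simpa using (HasDerivAt.ofReal_comp (hasDerivAt_id r)).const_mul (Complex.I * (k : ℂ))
    have h2 := h1.cexp.mul ((hg₁ r).sub ((hg r).const_mul (Complex.I * (k : ℂ))))
    refine h2.congr_deriv ?_
    simp only [Pi.sub_apply]
    linear_combination (-(k : ℂ) ^ 2 * Complex.exp (Complex.I * k * r) * g r) * Complex.I_sq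
  have hlim : Tendsto
      (fun r : ℝ => Complex.exp (Complex.I * k * r) * (g₁ r - Complex.I * k * g r))
      atTop (𝓝 0) := by
    have h := (hz g₁ b1).sub ((hz g b0).const_mul (Complex.I * (k : ℂ)))
    rw [mul_zero, sub_zero] at h
    rw [tendsto_zero_iff_norm_tendsto_zero] at h ⊢
    simpa only [norm_mul, hE, one_mul] using h
  have hFTC := integral_Ioi_of_hasDerivAt_of_tendsto' (a := 0) (fun r _ => hderiv r)
    (hi2.add (hi0.const_mul _)) hlim
  rw [integral_add hi2 (hi0.const_mul _), integral_const_mul, h0, h10] at hFTC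
  have hkey : (k : ℂ) ^ 2 * ∫ r in Ioi (0 : ℝ), Complex.exp (Complex.I * k * r) * g r
      = -∫ r in Ioi (0 : ℝ), Complex.exp (Complex.I * k * r) * g₂ r := by
    linear_combination hFTC
  have hnorm := congrArg norm hkey
  rw [norm_mul, norm_pow, Complex.norm_real, Real.norm_eq_abs, sq_abs, norm_neg] at hnorm
  rw [hnorm]
  refine norm_integral_le_of_norm_le hdom ?_
  filter_upwards [ae_restrict_mem measurableSet_Ioi] with r hr
  rw [norm_mul, hE, one_mul]
  exact b2 r (le_of_lt hr)

/-- Integration in polar coordinates on `ℝ³`. -/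
lemma integral_eq_integral_sphere_integral_Ioi {F : EuclideanSpace ℝ (Fin 3) → ℂ}
    (hF : Integrable F) :
    ∫ y, F y = ∫ ω : Metric.sphere (0 : EuclideanSpace ℝ (Fin 3)) 1,
      (∫ r in Ioi (0 : ℝ), (r : ℂ) ^ 2 * F (r • (ω : EuclideanSpace ℝ (Fin 3))))
        ∂(volume : Measure (EuclideanSpace ℝ (Fin 3))).toSphere := by
  set μ : Measure (EuclideanSpace ℝ (Fin 3)) := volume
  have hmp := μ.measurePreserving_homeomorphUnitSphereProd
  rw [finrank_euclideanSpace_fin] at hmp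
  have hemb := Homeomorph.measurableEmbedding (homeomorphUnitSphereProd (EuclideanSpace ℝ (Fin 3)))
  let P : Metric.sphere (0 : EuclideanSpace ℝ (Fin 3)) 1 × Ioi (0 : ℝ) → ℂ :=
    fun p => F (p.2.1 • p.1.1)
  have hP : ∀ y : ({0}ᶜ : Set (EuclideanSpace ℝ (Fin 3))),
      P (homeomorphUnitSphereProd _ y) = F y := by
    rintro ⟨y, hy⟩
    have : ‖y‖ ≠ 0 := norm_ne_zero_iff.2 hy
    simp [P, smul_smul, this]
  have hPi : Integrable P (μ.toSphere.prod (.volumeIoiPow (3 - 1))) := by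
    rw [← hmp.integrable_comp_emb hemb]
    have : P ∘ homeomorphUnitSphereProd _ = F ∘ Subtype.val := funext hP
    rw [this, ← integrableOn_iff_comap_subtypeVal (measurableSet_singleton _).compl]
    exact hF.integrableOn
  calc ∫ y, F y ∂μ
      = ∫ y : ({0}ᶜ : Set (EuclideanSpace ℝ (Fin 3))), F y ∂(μ.comap (↑)) := by
        rw [integral_subtype_comap (measurableSet_singleton _).compl F, restrict_compl_singleton]
    _ = ∫ p, P p ∂(μ.toSphere.prod (.volumeIoiPow (3 - 1))) := by
        rw [← hmp.integral_comp hemb]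
        simp only [hP]
    _ = ∫ ω, (∫ r, P (ω, r) ∂(.volumeIoiPow (3 - 1))) ∂μ.toSphere := integral_prod _ hPi
    _ = _ := by
        congr 1 with ω
        simp only [Measure.volumeIoiPow, ENNReal.ofReal]
        rw [integral_withDensity_eq_integral_smul
            (measurable_subtype_coe.pow_const _).real_toNNReal,
          integral_subtype_comap measurableSet_Ioi
            fun a : ℝ => Real.toNNReal (a ^ (3 - 1)) • F (a • ω.1)]
        refine setIntegral_congr_fun measurableSet_Ioi fun r hr => ?_
        simp only [NNReal.smul_def, Real.coe_toNNReal _ (pow_nonneg (le_of_lt hr) _)]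
        simp [Complex.real_smul]

lemma exists_one_add_norm_pow_mul_le {V : Type*} [NormedAddCommGroup V] [NormedSpace ℝ V]
    (u : SchwartzMap (EuclideanSpace ℝ (Fin 3)) V) :
    ∃ A, ∀ y, (1 + ‖y‖) ^ 4 * ‖u y‖ ≤ A :=
  ⟨_, fun y => by
    simpa using SchwartzMap.one_add_le_sup_seminorm_apply (𝕜 := ℝ) (m := (4, 0))
      le_rfl le_rfl u y⟩

/-- The radial integrals are `O(k⁻²)`, uniformly in the direction `ω`. -/
lemma exists_ray_bound (f : SchwartzMap (EuclideanSpace ℝ (Fin 3)) ℂ) :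
    ∃ M : ℝ, ∀ (k : ℝ) (ω : EuclideanSpace ℝ (Fin 3)), ‖ω‖ = 1 →
      k ^ 2 * ‖∫ r in Ioi (0 : ℝ), Complex.exp (Complex.I * k * r) * ((r : ℂ) ^ 2 * f (r • ω))‖
        ≤ M := by
  let f₁ := SchwartzMap.fderivCLM ℝ _ _ f
  let f₂ := SchwartzMap.fderivCLM ℝ _ _ f₁
  obtain ⟨A₀, h₀⟩ := exists_one_add_norm_pow_mul_le f
  obtain ⟨A₁, h₁⟩ := exists_one_add_norm_pow_mul_le f₁
  obtain ⟨A₂, h₂⟩ := exists_one_add_norm_pow_mul_le f₂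
  set A := max A₀ (max A₁ A₂) with hA
  have hA₀ : A₀ ≤ A := le_max_left _ _
  have hA₁ : A₁ ≤ A := (le_max_left _ _).trans (le_max_right _ _)
  have hA₂ : A₂ ≤ A := (le_max_right _ _).trans (le_max_right _ _)
  -- The constant `7 = 2 + 4 + 1` is the sum of the coefficients in `2f + 4r f' + r² f''`.
  refine ⟨∫ r in Ioi (0 : ℝ), (7 * A) * (1 + r ^ 2)⁻¹, fun k ω hω => ?_⟩
  have hray : ∀ r : ℝ, HasDerivAt (fun r : ℝ => r • ω) ω r := fun r => by
    simpa using (hasDerivAt_id r).smul_const ω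
  have hd0 : ∀ r : ℝ, HasDerivAt (fun r : ℝ => f (r • ω)) (f₁ (r • ω) ω) r := fun r =>
    (f.differentiableAt.hasFDerivAt (x := r • ω)).comp_hasDerivAt r (hray r)
  have hd1 : ∀ r : ℝ, HasDerivAt (fun r : ℝ => f₁ (r • ω) ω) (f₂ (r • ω) ω ω) r := fun r => by
    have h := (f₁.differentiableAt.hasFDerivAt (x := r • ω)).comp_hasDerivAt r (hray r)
    have h' := h.clm_apply (hasDerivAt_const r ω)
    rw [map_zero, add_zero] at h'
    exact h'
  have hr2 : ∀ r : ℝ, HasDerivAt (fun r : ℝ => (r : ℂ) ^ 2) (2 * (r : ℂ)) r := fun r => by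
    have h := (HasDerivAt.ofReal_comp (hasDerivAt_id r)).pow 2
    exact h.congr_deriv (by simp)
  have hr1 : ∀ r : ℝ, HasDerivAt (fun r : ℝ => 2 * (r : ℂ)) 2 r := fun r => by
    simpa using (HasDerivAt.ofReal_comp (hasDerivAt_id r)).const_mul (2 : ℂ)
  have hb0 : ∀ r : ℝ, 0 ≤ r → (1 + r) ^ 4 * ‖f (r • ω)‖ ≤ A := fun r hr => by
    have := h₀ (r • ω)
    rw [norm_smul, hω, mul_one, Real.norm_of_nonneg hr] at this
    exact this.trans hA₀
  have hb1 : ∀ r : ℝ, 0 ≤ r → (1 + r) ^ 4 * ‖f₁ (r • ω) ω‖ ≤ A := fun r hr => by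
    have := h₁ (r • ω)
    rw [norm_smul, hω, mul_one, Real.norm_of_nonneg hr] at this
    have h' : ‖f₁ (r • ω) ω‖ ≤ ‖f₁ (r • ω)‖ := by
      simpa [hω] using (f₁ (r • ω)).le_opNorm ω
    exact (mul_le_mul_of_nonneg_left h' (by positivity)).trans (this.trans hA₁)
  have hb2 : ∀ r : ℝ, 0 ≤ r → (1 + r) ^ 4 * ‖f₂ (r • ω) ω ω‖ ≤ A := fun r hr => by
    have := h₂ (r • ω)
    rw [norm_smul, hω, mul_one, Real.norm_of_nonneg hr] at this
    have h' : ‖f₂ (r • ω) ω ω‖ ≤ ‖f₂ (r • ω)‖ := by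
      simpa [hω] using (f₂ (r • ω)).le_opNorm₂ ω ω
    exact (mul_le_mul_of_nonneg_left h' (by positivity)).trans (this.trans hA₂)
  have hcomb : ∀ (r a b c α β γ : ℝ), 0 ≤ r → 0 ≤ a → 0 ≤ b → 0 ≤ c →
      (1 + r) ^ 4 * a ≤ A → (1 + r) ^ 4 * b ≤ A → (1 + r) ^ 4 * c ≤ A →
      0 ≤ α → 0 ≤ β → 0 ≤ γ → α ≤ 2 * (1 + r) ^ 2 → β ≤ 4 * (1 + r) ^ 2 → γ ≤ (1 + r) ^ 2 →
      α * a + β * b + γ * c ≤ (7 * A) * (1 + r ^ 2)⁻¹ := by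
    intro r a b c α β γ hr ha hb hc hA0 hA1 hA2 hα hβ hγ hα' hβ' hγ'
    rw [← div_eq_mul_inv, le_div_iff₀ (by positivity)]
    have hsq : 1 + r ^ 2 ≤ (1 + r) ^ 2 := by nlinarith
    calc (α * a + β * b + γ * c) * (1 + r ^ 2)
        ≤ (2 * (1 + r) ^ 2 * a + 4 * (1 + r) ^ 2 * b + (1 + r) ^ 2 * c) * (1 + r) ^ 2 := by
          gcongr
      _ = 2 * ((1 + r) ^ 4 * a) + 4 * ((1 + r) ^ 4 * b) + (1 + r) ^ 4 * c := by ring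
      _ ≤ 7 * A := by linarith
  refine sq_mul_norm_oscillatory_integral_le (B := 7 * A) k
    (g := fun r => (r : ℂ) ^ 2 * f (r • ω))
    (g₁ := fun r => 2 * (r : ℂ) * f (r • ω) + (r : ℂ) ^ 2 * f₁ (r • ω) ω)
    (g₂ := fun r => 2 * f (r • ω) + 4 * (r : ℂ) * f₁ (r • ω) ω + (r : ℂ) ^ 2 * f₂ (r • ω) ω ω)
    (fun r => (hr2 r).mul (hd0 r)) (fun r => ?_) ?_ (by simp) (by simp) ?_ ?_ ?_
  · exact (((hr1 r).mul (hd0 r)).add ((hr2 r).mul (hd1 r))).congr_deriv (by ring)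
  · have c0 := f.continuous
    have c1 := f₁.continuous
    have c2 := f₂.continuous
    fun_prop
  · intro r hr
    have := hcomb r _ _ _ (r ^ 2) 0 0 hr (norm_nonneg _) (norm_nonneg _) (norm_nonneg _)
      (hb0 r hr) (hb1 r hr) (hb2 r hr) (by positivity) le_rfl le_rfl (by nlinarith)
      (by positivity) (by positivity)
    simpa [abs_of_nonneg hr] using this
  · intro r hr
    have := hcomb r _ _ _ (2 * r) (r ^ 2) 0 hr (norm_nonneg _) (norm_nonneg _) (norm_nonneg _)
      (hb0 r hr) (hb1 r hr) (hb2 r hr) (by positivity) (by positivity) le_rfl (by nlinarith)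
      (by nlinarith) (by positivity)
    refine (norm_add_le _ _).trans ?_
    simpa [abs_of_nonneg hr] using this
  · intro r hr
    have := hcomb r _ _ _ 2 (4 * r) (r ^ 2) hr (norm_nonneg _) (norm_nonneg _) (norm_nonneg _)
      (hb0 r hr) (hb1 r hr) (hb2 r hr) (by positivity) (by positivity) (by positivity)
      (by nlinarith) (by nlinarith) (by nlinarith)
    refine (norm_add₃_le).trans ?_
    simpa [abs_of_nonneg hr] using this

/-- If `f` is Schwartz on `ℝ³`, then `F₀(x,t) := ∫ e^{i|x||y|/(2t)} f(y) d³y = 𝒪(2)`: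
there are `C, R₀, T₀ > 0` such that `(|x|/t)^q |F₀(x,t)| ≤ C` for all `|x| ≥ R₀`,
`t ≥ T₀` and `0 ≤ q ≤ 2`. -/
theorem schwartz_radial_oscillatory_integral_O_two
    (f : SchwartzMap (EuclideanSpace ℝ (Fin 3)) ℂ) :
    ∃ C > 0, ∃ R₀ > 0, ∃ T₀ > 0,
      ∀ x : EuclideanSpace ℝ (Fin 3), R₀ ≤ ‖x‖ → ∀ t : ℝ, T₀ ≤ t → ∀ q : ℕ, q ≤ 2 →
        (‖x‖ / t) ^ q *
          ‖∫ y : EuclideanSpace ℝ (Fin 3),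
              Complex.exp (Complex.I * ‖x‖ * ‖y‖ / (2 * t)) * f y‖ ≤ C := by
  obtain ⟨M, hM⟩ := exists_ray_bound f
  set S := (volume : Measure (EuclideanSpace ℝ (Fin 3))).toSphere.real univ
  set N := ∫ y, ‖f y‖
  have hN : 0 ≤ N := integral_nonneg fun _ => norm_nonneg _
  have hS : 0 ≤ S := measureReal_nonneg
  have hM0 : 0 ≤ M := by
    obtain ⟨ω, hω⟩ := exists_norm_eq (EuclideanSpace ℝ (Fin 3)) zero_le_one
    exact le_trans (by positivity) (hM 0 ω hω)
  refine ⟨N + 4 * (M * S) + 1, by positivity, 1, one_pos, 1, one_pos, ?_⟩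
  intro x hx t ht q hq
  have ht0 : 0 < t := one_pos.trans_le ht
  set k : ℝ := ‖x‖ / (2 * t) with hk
  have hk0 : 0 < k := by have := one_pos.trans_le hx; positivity
  have hphase : ∀ y : EuclideanSpace ℝ (Fin 3),
      Complex.I * ‖x‖ * ‖y‖ / (2 * t) = Complex.I * k * (‖y‖ : ℂ) := fun y => by
    rw [hk]; push_cast; ring
  simp only [hphase]
  have hE : ∀ r : ℝ, ‖Complex.exp (Complex.I * k * r)‖ = 1 := fun r => by
    rw [show Complex.I * k * r = ((k * r : ℝ) : ℂ) * Complex.I by push_cast; ring,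
      Complex.norm_exp_ofReal_mul_I]
  set J := ∫ y : EuclideanSpace ℝ (Fin 3), Complex.exp (Complex.I * k * (‖y‖ : ℂ)) * f y with hJ
  have hint : Integrable fun y : EuclideanSpace ℝ (Fin 3) =>
      Complex.exp (Complex.I * k * (‖y‖ : ℂ)) * f y := by
    refine f.integrable.norm.mono' ?_ (Eventually.of_forall fun y => ?_)
    · have := f.continuous
      exact Continuous.aestronglyMeasurable (by fun_prop)
    · rw [norm_mul, hE, one_mul]
  have hJ0 : ‖J‖ ≤ N := by
    refine norm_integral_le_of_norm_le f.integrable.norm (Eventually.of_forall fun y => ?_)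
    rw [norm_mul, hE, one_mul]
  have hJ2 : k ^ 2 * ‖J‖ ≤ M * S := by
    have hb : ‖J‖ ≤ M / k ^ 2 * S := by
      rw [hJ, integral_eq_integral_sphere_integral_Ioi hint]
      refine norm_integral_le_of_norm_le_const (Eventually.of_forall fun ω => ?_)
      have hω : ‖(ω : EuclideanSpace ℝ (Fin 3))‖ = 1 := by simp
      rw [le_div_iff₀ (by positivity), mul_comm]
      refine le_trans (le_of_eq ?_) (hM k ω hω)
      congr 2
      refine setIntegral_congr_fun measurableSet_Ioi fun r hr => ?_
      simp only [norm_smul, hω, mul_one, Real.norm_of_nonneg (le_of_lt hr)]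
      ring
    calc k ^ 2 * ‖J‖ ≤ k ^ 2 * (M / k ^ 2 * S) := by gcongr
      _ = M * S := by field_simp
  have h2k : ‖x‖ / t = 2 * k := by rw [hk]; field_simp
  rw [h2k]
  have hMS : 0 ≤ M * S := by positivity
  have hJn := norm_nonneg J
  interval_cases q
  · linarith
  · nlinarith [mul_nonneg (sq_nonneg (2 * k - 1)) hJn]
  · linarith
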